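/- Let A₁ ⊆ A be a subalgebra with 1_B ∈ A₁ and F₁ ⊆ F a subalgebra. Then the pair (A₁, F₁) is cyclic-antimonotone independent (with respect to (φ, Φ)) if and only if the two unital subalgebras A₁ and ℂ·1_B + F₁ of B are infinitesimally free with respect to (φ, φ′). -/

import Mathlib

open scoped BigOperators

namespace TypeBPrime

variable {B : Type*} [Ring B] [Algebra ℂ B]

/-- The alternating word `a 0 * (f 0 * a 1) * ⋯ * (f (n-1) * a n)`. -/
def altWord {n : ℕ} (a : Fin (n + 1) → B) (f : Fin n → B) : B :=
  a 0 * (List.ofFn fun k : Fin n => f k * a k.succ).prod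

/-- Cyclic-antimonotone independence of the pair `(A₁, F₁)` with respect to `(φ, Φ)`:
`Φ(a₀ f₁ a₁ ⋯ fₙ aₙ) = φ(a₀ aₙ) · φ(a₁) ⋯ φ(a_{n-1}) · Φ(f₁ ⋯ fₙ)` for all `n ≥ 1`. -/
def CyclicAntimonotone (φ Φ : B → ℂ) (A₁ F₁ : Set B) : Prop :=
  ∀ n : ℕ, 0 < n → ∀ (a : Fin (n + 1) → B) (f : Fin n → B),
    (∀ k, a k ∈ A₁) → (∀ k, f k ∈ F₁) →
    Φ (altWord a f) =
      φ (a 0 * a (Fin.last n)) *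
        (∏ k ∈ Finset.Ioo (0 : Fin (n + 1)) (Fin.last n), φ (a k)) *
        Φ (List.ofFn f).prod

/-- Freeness of a family of subsets with respect to `φ`:
alternating words in centered elements are centered. -/
def IsFreeFamily {ι : Type*} (φ : B → ℂ) (Alg : ι → Set B) : Prop :=
  ∀ (n : ℕ) (idx : Fin (n + 1) → ι) (a : Fin (n + 1) → B),
    (∀ k : Fin n, idx k.castSucc ≠ idx k.succ) →
    (∀ k, a k ∈ Alg (idx k)) → (∀ k, φ (a k) = 0) →
    φ (List.ofFn a).prod = 0

/-- Infinitesimal freeness of a family of subsets with respect to `(φ, φ')`. -/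
def IsInfFree {ι : Type*} (φ φ' : B → ℂ) (Alg : ι → Set B) : Prop :=
  IsFreeFamily φ Alg ∧
  (∀ (n : ℕ) (idx : Fin (n + 1) → ι) (b : Fin (n + 1) → B),
    (∀ k : Fin n, idx k.castSucc ≠ idx k.succ) →
    (∀ k, b k ∈ Alg (idx k)) → (∀ k, φ (b k) = 0) →
    ¬(Even n ∧ ∀ k, idx k = idx k.rev) →
    φ' (List.ofFn b).prod = 0) ∧
  (∀ (m : ℕ) (idx : Fin (2 * m + 1) → ι) (b : Fin (2 * m + 1) → B),
    (∀ k : Fin (2 * m), idx k.castSucc ≠ idx k.succ) →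
    (∀ k, b k ∈ Alg (idx k)) → (∀ k, φ (b k) = 0) →
    (∀ k, idx k = idx k.rev) →
    φ' (List.ofFn b).prod =
      (∏ j : Fin m,
          φ (b (Fin.castLE (by omega) j) * b (Fin.castLE (by omega) j).rev)) *
        φ' (b ⟨m, by omega⟩))

/-- Trivial independence with respect to `Φ`: alternating words of length `≥ 2` vanish. -/
def TrivIndep {ι : Type*} (Φ : B → ℂ) (Fj : ι → Set B) : Prop :=
  ∀ (n : ℕ) (idx : Fin (n + 2) → ι) (f : Fin (n + 2) → B),
    (∀ k : Fin (n + 1), idx k.castSucc ≠ idx k.succ) →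
    (∀ k, f k ∈ Fj (idx k)) →
    Φ (List.ofFn f).prod = 0

/-- Boolean independence with respect to `ψ`. -/
def BoolIndep {ι : Type*} (ψ : B → ℂ) (C : ι → Set B) : Prop :=
  ∀ (n : ℕ) (idx : Fin (n + 1) → ι) (c : Fin (n + 1) → B),
    (∀ k : Fin n, idx k.castSucc ≠ idx k.succ) →
    (∀ k, c k ∈ C (idx k)) →
    ψ (List.ofFn c).prod = ∏ k, ψ (c k)

/-- Conditional freeness with respect to `(φ, ψ)`. -/
def CFree {ι : Type*} (φ ψ : B → ℂ) (Alg : ι → Set B) : Prop :=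
  IsFreeFamily φ Alg ∧
  ∀ (n : ℕ) (idx : Fin (n + 1) → ι) (b : Fin (n + 1) → B),
    (∀ k : Fin n, idx k.castSucc ≠ idx k.succ) →
    (∀ k, b k ∈ Alg (idx k)) → (∀ k, φ (b k) = 0) →
    ψ (List.ofFn b).prod = ∏ k, ψ (b k)

/-- The unital subspace `ℂ·1_B + F₁`. -/
def unitize (F₁ : Set B) : Set B :=
  {x | ∃ c : ℂ, ∃ f ∈ F₁, x = algebraMap ℂ B c + f}

/-- The set of alternating words `a₀ f₁ a₁ ⋯ fₙ aₙ` with letters from `A₁` and `F₁`. -/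
def wordSet (A₁ F₁ : Set B) : Set B :=
  {x | ∃ n : ℕ, 0 < n ∧ ∃ (a : Fin (n + 1) → B) (f : Fin n → B),
    (∀ k, a k ∈ A₁) ∧ (∀ k, f k ∈ F₁) ∧ x = altWord a f}

/-- `A₁⟨F₁⟩₀`: the linear span of all alternating words `a₀ f₁ a₁ ⋯ fₙ aₙ`. -/
def wordSpan (A₁ F₁ : Set B) : Set B :=
  (Submodule.span ℂ (wordSet A₁ F₁) : Submodule ℂ B)

/-- The type B′ subalgebra `A₁⟨F₁⟩ = A₁ + A₁⟨F₁⟩₀`. -/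
def typeBSub (A₁ F₁ : Set B) : Set B :=
  {x | ∃ a ∈ A₁, ∃ f ∈ wordSpan A₁ F₁, x = a + f}

/-- `(tₙ)` is the inverse Markov–Krein transform of the sequence `(mₙ)`:
`(n+1)·mₙ = Σ_{j=0}^{n} tⱼ m_{n−j}` for all `n ≥ 0`. -/
def IsInvMK (m t : ℕ → ℂ) : Prop :=
  ∀ n : ℕ, ((n : ℂ) + 1) * m n = ∑ j ∈ Finset.range (n + 1), t j * m (n - j)

/-!
Both conditions amount to the same description of `Φ` on alternating words of at least two centered
letters; as `φ` vanishes on the ideal `F`, the centered letters of `ℂ 1 + F₁` are exactly the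
elements of `F₁`. On such words both conditions say that `Φ` vanishes, except that
`Φ(a f a') = φ(a a') Φ(f)`: the cyclic-antimonotone formula contains a factor `φ(a) = 0` for every
other word, while the infinitesimal freeness formula is zero for words of even length and contains
an outer factor `φ(f f') = 0` with `f, f' ∈ F` for the remaining ones. Conversely these values
determine `Φ` on the words `a₀ f₁ a₁ ⋯ fₙ aₙ`: expanding every letter as
`a = φ(a) 1 + (a - φ(a) 1)`, any centered interior letter makes the term vanish.
-/

section CyclicWords

variable {E : Type*} [Ring E]

theorem altWord_succ {m : ℕ} (a : Fin (m + 2) → E) (f : Fin (m + 1) → E) :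
    altWord a f =
      a 0 * (List.ofFn fun k : Fin m => f k.castSucc * a k.castSucc.succ).prod *
        f (Fin.last m) * a (Fin.last (m + 1)) := by
  rw [altWord, List.ofFn_succ']
  simp [mul_assoc]

theorem prod_Ioo_zero_last {M : Type*} [CommMonoid M] {m : ℕ} (g : Fin (m + 2) → M) :
    ∏ k ∈ Finset.Ioo 0 (Fin.last (m + 1)), g k = ∏ k : Fin m, g k.castSucc.succ := by
  rw [← Fin.castSucc_zero, ← Fin.map_castSuccEmb_Ioi, Finset.prod_map, Fin.prod_Ioi_zero]
  rfl

/- The interior of the word `x f₁ a₁ ⋯ fₘ aₘ f z` is recorded as the list of pairs `(fₖ, aₖ)`,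
so that words can be built and taken apart by induction. -/
theorem cyclicAntimonotone_iff_forall_list {φ Φ : E → ℂ} {A₁ F₁ : Set E} :
    CyclicAntimonotone φ Φ A₁ F₁ ↔
      ∀ D : List (E × E), (∀ p ∈ D, p.1 ∈ F₁ ∧ p.2 ∈ A₁) →
        ∀ x ∈ A₁, ∀ f ∈ F₁, ∀ z ∈ A₁,
          Φ (x * (D.map fun p => p.1 * p.2).prod * f * z) =
            φ (x * z) * (D.map fun p => φ p.2).prod * Φ ((D.map fun p => p.1).prod * f) := by
  constructor
  · intro h D
    induction D using List.ofFnRec with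
    | h m g =>
      intro hD x hx f hf z hz
      rw [List.forall_mem_ofFn_iff] at hD
      have hword := h (m + 1) m.succ_pos
        (Fin.cons x (Fin.snoc (fun k => (g k).2) z : Fin (m + 1) → E))
        (Fin.snoc (fun k => (g k).1) f)
        (Fin.cases hx (Fin.lastCases (by simpa using hz) fun k => by simpa using (hD k).2))
        (Fin.lastCases (by simpa using hf) fun k => by simpa using (hD k).1)
      rw [altWord_succ, prod_Ioo_zero_last, List.ofFn_succ', ← Fin.succ_last] at hword
      simpa [List.map_ofFn, Function.comp_def, List.prod_ofFn] using hword
  · intro h n hn a f ha hf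
    obtain ⟨m, rfl⟩ := Nat.exists_eq_succ_of_ne_zero hn.ne'
    have hword := h (List.ofFn fun k : Fin m => (f k.castSucc, a k.castSucc.succ))
      (List.forall_mem_ofFn_iff.2 fun k => ⟨hf _, ha _⟩) _ (ha 0) _ (hf (Fin.last m)) _
      (ha (Fin.last (m + 1)))
    rw [altWord_succ, prod_Ioo_zero_last, List.ofFn_succ']
    simpa [List.map_ofFn, Function.comp_def, List.prod_ofFn] using hword

theorem CyclicAntimonotone.congr_of_eqOn {F : TwoSidedIdeal E} {φ Φ Ψ : E → ℂ} {A₁ F₁ : Set E}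
    (hF₁ : F₁ ⊆ F) (hΦ : Set.EqOn Φ Ψ F) (h : CyclicAntimonotone φ Φ A₁ F₁) :
    CyclicAntimonotone φ Ψ A₁ F₁ := by
  rw [cyclicAntimonotone_iff_forall_list] at h ⊢
  intro D hD x hx f hf z hz
  rw [← hΦ (F.mul_mem_right _ _ (F.mul_mem_left _ _ (hF₁ hf))),
    ← hΦ (F.mul_mem_left _ _ (hF₁ hf))]
  exact h D hD x hx f hf z hz

end CyclicWords

section Centering

variable {R E : Type*} [CommRing R] [Ring E] [Algebra R E]

/-- The centering `x - φ(x) 1` of `x` with respect to `φ`, which lies in the kernel of `φ` as soon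
as `φ 1 = 1`. -/
def centering (φ : E →ₗ[R] R) (x : E) : E :=
  x - φ x • 1

theorem map_centering {φ : E →ₗ[R] R} (hφ : φ 1 = 1) (x : E) : φ (centering φ x) = 0 := by
  simp [centering, hφ]

theorem centering_mem (φ : E →ₗ[R] R) {A₁ : Subalgebra R E} {x : E} (hx : x ∈ A₁) :
    centering φ x ∈ A₁ :=
  sub_mem hx (A₁.smul_mem A₁.one_mem _)

theorem smul_one_add_centering (φ : E →ₗ[R] R) (x : E) : φ x • 1 + centering φ x = x :=
  add_sub_cancel _ _

theorem map_mul_mul_eq_centering (φ Φ : E →ₗ[R] R) (x w z : E) :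
    Φ (x * w * z) =
      φ x * φ z * Φ w + φ z * Φ (centering φ x * w) + φ x * Φ (w * centering φ z) +
        Φ (centering φ x * w * centering φ z) := by
  conv_lhs => rw [← smul_one_add_centering φ x, ← smul_one_add_centering φ z]
  simp only [add_mul, mul_add, Algebra.smul_mul_assoc, Algebra.mul_smul_comm, one_mul, mul_one,
    smul_add, map_add, map_smul, smul_eq_mul]
  ring

theorem map_mul_eq_centering {φ : E →ₗ[R] R} (hφ : φ 1 = 1) (x z : E) :
    φ (x * z) = φ x * φ z + φ (centering φ x * centering φ z) := by
  simpa [hφ, map_centering hφ] using map_mul_mul_eq_centering φ φ x 1 z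

/- Splitting the last uncentered letter as `a = φ(a) 1 + (a - φ(a) 1)`, the scalar part merges its
two neighbours and the centered part joins the tail `C`. -/
theorem cyclic_factorization_of_centered {S : Type*} [SetLike S E] [MulMemClass S E]
    {φ Φ : E →ₗ[R] R} (hφ : φ 1 = 1) (A₁ : Subalgebra R E) (F₁ : S) (x z : E)
    (hcentered : ∀ C : List (E × E), (∀ p ∈ C, (p.1 ∈ A₁ ∧ φ p.1 = 0) ∧ p.2 ∈ F₁) →
      ∀ f ∈ F₁, Φ (x * (f * (C.map fun p => p.1 * p.2).prod) * z) =
        φ (x * z) * (C.map fun p => φ p.1).prod * Φ (f * (C.map fun p => p.2).prod))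
    (D : List (E × E)) (hD : ∀ p ∈ D, p.1 ∈ F₁ ∧ p.2 ∈ A₁)
    (C : List (E × E)) (hC : ∀ p ∈ C, (p.1 ∈ A₁ ∧ φ p.1 = 0) ∧ p.2 ∈ F₁) (f : E) (hf : f ∈ F₁) :
    Φ (x * ((D.map fun p => p.1 * p.2).prod * f * (C.map fun p => p.1 * p.2).prod) * z) =
      φ (x * z) * (D.map fun p => φ p.2).prod * (C.map fun p => φ p.1).prod *
        Φ ((D.map fun p => p.1).prod * f * (C.map fun p => p.2).prod) := by
  induction D using List.reverseRecOn generalizing C f with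
  | nil => simpa using hcentered C hC f hf
  | append_singleton D p ih =>
    obtain ⟨g, a⟩ := p
    simp only [List.forall_mem_append, List.forall_mem_singleton] at hD
    obtain ⟨hD, hg, ha⟩ := hD
    have hmerge := ih hD C hC (g * f) (mul_mem hg hf)
    have hcenter := ih hD ((centering φ a, f) :: C)
      (List.forall_mem_cons.2 ⟨⟨⟨centering_mem φ ha, map_centering hφ a⟩, hf⟩, hC⟩) g hg
    conv_lhs => rw [List.map_append, List.map_singleton, ← smul_one_add_centering φ a]
    simp only [List.map_cons, List.prod_cons, map_centering hφ, zero_mul, mul_zero, mul_assoc]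
      at hmerge hcenter
    simp only [List.map_append, List.map_cons, List.map_nil, List.prod_append, List.prod_cons,
      List.prod_nil, mul_add, add_mul, mul_assoc, mul_one, Algebra.mul_smul_comm,
      Algebra.smul_mul_assoc, map_add, map_smul, smul_eq_mul, hmerge, hcenter, add_zero]
    ring

end Centering

section AlternatingWords

/-- `IsAlternating S i l` says that the letters of the word `l` lie in turn in
`S i, S (!i), S i, …`. -/
def IsAlternating {α : Type*} (S : Bool → Set α) : Bool → List α → Prop
  | _, [] => True
  | i, b :: l => b ∈ S i ∧ IsAlternating S (!i) l

theorem isAlternating_ofFn_iff {α : Type*} {S : Bool → Set α} {n : ℕ} {b : Fin n → α} {i : Bool} :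
    IsAlternating S i (List.ofFn b) ↔ ∀ k : Fin n, b k ∈ S (i ^^ (k : ℕ).bodd) := by
  induction n generalizing i with
  | zero => simp [IsAlternating]
  | succ n ih => simp [IsAlternating, ih, Fin.forall_fin_succ]

theorem IsAlternating.flatMap_append {α : Type*} {S : Bool → Set α} {i : Bool}
    {C : List (α × α)} {l : List α} (hC : ∀ p ∈ C, p.1 ∈ S i ∧ p.2 ∈ S !i)
    (hl : IsAlternating S i l) : IsAlternating S i ((C.flatMap fun p => [p.1, p.2]) ++ l) := by
  induction C with
  | nil => simpa using hl
  | cons p C ih =>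
    rw [List.forall_mem_cons] at hC
    simpa [IsAlternating, hC.1] using ih hC.2

theorem prod_flatMap_pair {M : Type*} [Monoid M] (C : List (M × M)) :
    (C.flatMap fun p => [p.1, p.2]).prod = (C.map fun p => p.1 * p.2).prod := by
  simp [List.flatMap, List.prod_flatten, Function.comp_def]

theorem IsAlternating.exists_prod_eq {M : Type*} [Monoid M] {S : Bool → Set M} :
    ∀ {l : List M}, IsAlternating S false l → l ≠ [] →
      ∃ D : List (M × M), (∀ p ∈ D, p.1 ∈ S false ∧ p.2 ∈ S true) ∧ (3 ≤ l.length → D ≠ []) ∧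
        ∃ f ∈ S false, ∃ z, (z = 1 ∨ z ∈ S true) ∧
          l.prod = (D.map fun p => p.1 * p.2).prod * f * z
  | [f], hl, _ => ⟨[], by simp, by simp, f, hl.1, 1, .inl rfl, by simp⟩
  | [f, a], hl, _ => ⟨[], by simp, by simp, f, hl.1, a, .inr hl.2.1, by simp⟩
  | f :: a :: g :: l, hl, _ => by
    obtain ⟨D, hD, -, h, hh, z, hz, hprod⟩ := hl.2.2.exists_prod_eq (List.cons_ne_nil g l)
    refine ⟨(f, a) :: D, List.forall_mem_cons.2 ⟨⟨hl.1, hl.2.1⟩, hD⟩, by simp, h, hh, z, hz, ?_⟩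
    rw [List.prod_cons, List.prod_cons, hprod]
    simp [mul_assoc]

variable {n : ℕ} {idx : Fin (n + 1) → Bool}

theorem eq_xor_bodd_of_alternating (hidx : ∀ k : Fin n, idx k.castSucc ≠ idx k.succ)
    (k : Fin (n + 1)) : idx k = (idx 0 ^^ (k : ℕ).bodd) := by
  induction k using Fin.induction with
  | zero => simp
  | succ k ih =>
    rw [Bool.eq_not.2 (hidx k).symm, ih]
    simp

theorem isAlternating_ofFn {α : Type*} {S : Bool → Set α} {b : Fin (n + 1) → α}
    (hidx : ∀ k : Fin n, idx k.castSucc ≠ idx k.succ) (hb : ∀ k, b k ∈ S (idx k)) :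
    IsAlternating S (idx 0) (List.ofFn b) :=
  isAlternating_ofFn_iff.2 fun k => eq_xor_bodd_of_alternating hidx k ▸ hb k

theorem eq_rev_of_alternating (hn : Even n) (hidx : ∀ k : Fin n, idx k.castSucc ≠ idx k.succ)
    (k : Fin (n + 1)) : idx k = idx k.rev := by
  have hsum : (k : ℕ) + k.rev = n := by rw [Fin.val_rev]; omega
  have hparity : (k : ℕ).bodd = (k.rev : ℕ).bodd := by
    obtain ⟨m, rfl⟩ := hn
    simpa using congrArg Nat.bodd hsum
  rw [eq_xor_bodd_of_alternating hidx k, eq_xor_bodd_of_alternating hidx k.rev, hparity]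

end AlternatingWords

section CenteredMoments

/-- The centered letters of an alternating word in `A₁` (colour `true`) and `ℂ 1 + F₁` (colour
`false`). As `φ` vanishes on `F₁`, the centered part of `ℂ 1 + F₁` is `F₁`. -/
def centeredLetters {E : Type*} (φ : E → ℂ) (A₁ F₁ : Set E) (i : Bool) : Set E :=
  if i then {a ∈ A₁ | φ a = 0} else F₁

/-- The values that infinitesimal freeness of `A₁` and `ℂ 1 + F₁` prescribes for `Φ` on alternating
words of length at least two in centered letters: it vanishes on all of them except on the words
`a f a'` with `f ∈ F₁`. -/
structure HasCenteredMoments {E : Type*} [Ring E] (φ Φ : E → ℂ) (A₁ F₁ : Set E) : Prop where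
  map_prod_eq_zero : ∀ i l, IsAlternating (centeredLetters φ A₁ F₁) i l → 2 ≤ l.length →
    ¬(i = true ∧ l.length = 3) → Φ l.prod = 0
  map_mul_mul : ∀ x ∈ centeredLetters φ A₁ F₁ true, ∀ f ∈ F₁,
    ∀ z ∈ centeredLetters φ A₁ F₁ true, Φ (x * f * z) = φ (x * z) * Φ f

theorem CyclicAntimonotone.hasCenteredMoments {E : Type*} [Ring E] {φ Φ : E → ℂ}
    {A₁ F₁ : Set E} (hone : 1 ∈ A₁) (h : CyclicAntimonotone φ Φ A₁ F₁) :
    HasCenteredMoments φ Φ A₁ F₁ := by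
  rw [cyclicAntimonotone_iff_forall_list] at h
  have hsandwich : ∀ x ∈ A₁, ∀ f ∈ F₁, ∀ z ∈ A₁, Φ (x * f * z) = φ (x * z) * Φ f :=
    fun x hx f hf z hz => by simpa using h [] (by simp) x hx f hf z hz
  have hlong : ∀ x ∈ A₁, ∀ l, IsAlternating (centeredLetters φ A₁ F₁) false l → 3 ≤ l.length →
      Φ (x * l.prod) = 0 := by
    intro x hx l hl hlen
    obtain ⟨D, hD, hDne, f, hf, z, hz, hprod⟩ :=
      hl.exists_prod_eq (List.ne_nil_of_length_pos (by omega))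
    obtain ⟨p, hp⟩ := List.exists_mem_of_ne_nil D (hDne hlen)
    have hφD : (D.map fun p => φ p.2).prod = 0 :=
      List.prod_eq_zero (List.mem_map.2 ⟨p, hp, (hD p hp).2.2⟩)
    have hzA : z ∈ A₁ := hz.elim (fun hz => hz ▸ hone) And.left
    simpa [hprod, mul_assoc, hφD] using
      h D (fun p hp => ⟨(hD p hp).1, (hD p hp).2.1⟩) x hx f hf z hzA
  refine ⟨?_, fun x hx f hf z hz => hsandwich x hx.1 f hf z hz.1⟩
  rintro (_ | _) l hl hlen hne
  · match l, hl, hlen with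
    | [f, a], ⟨hf, ha, _⟩, _ => simpa [ha.2] using hsandwich 1 hone f hf a ha.1
    | f :: a :: g :: l, hl, _ => simpa using hlong 1 hone _ hl (by simp)
  · match l, hl, hlen with
    | [a, f], ⟨ha, hf, _⟩, _ => simpa [ha.2] using hsandwich a ha.1 f hf 1 hone
    | [_, _, _], _, _ => exact absurd ⟨rfl, rfl⟩ hne
    | a :: f :: b :: g :: l, ⟨ha, hl⟩, _ => simpa using hlong a ha.1 _ hl (by simp)

variable {φ Φ : B →ₗ[ℂ] ℂ} {A₁ : Subalgebra ℂ B}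

theorem centering_mem_centeredLetters (hφ : φ 1 = 1) (F₁ : Set B) {x : B} (hx : x ∈ A₁) :
    centering φ x ∈ centeredLetters φ (A₁ : Set B) F₁ true :=
  ⟨centering_mem φ hx, map_centering hφ x⟩

theorem HasCenteredMoments.map_mul_mul_of_mem {F₁ : Set B} (h : HasCenteredMoments φ Φ A₁ F₁)
    (hφ : φ 1 = 1) {x f z : B} (hx : x ∈ A₁) (hf : f ∈ F₁) (hz : z ∈ A₁) :
    Φ (x * f * z) = φ (x * z) * Φ f := by
  have hx₀ := centering_mem_centeredLetters hφ F₁ hx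
  have hz₀ := centering_mem_centeredLetters hφ F₁ hz
  have hxf : Φ (centering φ x * f) = 0 := by
    simpa using h.map_prod_eq_zero true [centering φ x, f] ⟨hx₀, hf, trivial⟩ (by simp) (by simp)
  have hfz : Φ (f * centering φ z) = 0 := by
    simpa using h.map_prod_eq_zero false [f, centering φ z] ⟨hf, hz₀, trivial⟩ (by simp) (by simp)
  rw [map_mul_mul_eq_centering φ Φ, hxf, hfz, h.map_mul_mul _ hx₀ f hf _ hz₀,
    map_mul_eq_centering hφ x z]
  ring

theorem HasCenteredMoments.map_mul_prod_mul_eq_zero {F₁ : Set B}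
    (h : HasCenteredMoments φ Φ A₁ F₁) (hφ : φ 1 = 1) {x z : B} (hx : x ∈ A₁)
    {w : List B} (hw : IsAlternating (centeredLetters φ A₁ F₁) false w)
    (hwz : IsAlternating (centeredLetters φ A₁ F₁) false (w ++ [centering φ z]))
    (hlen : 3 ≤ w.length) : Φ (x * w.prod * z) = 0 := by
  have hx₀ := centering_mem_centeredLetters hφ F₁ hx
  have hΦw : Φ w.prod = 0 := h.map_prod_eq_zero false w hw (by omega) (by simp)
  have hΦxw : Φ (centering φ x * w.prod) = 0 := by
    simpa using h.map_prod_eq_zero true (centering φ x :: w) ⟨hx₀, hw⟩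
      (by simp; omega) (by simp; omega)
  have hΦwz : Φ (w.prod * centering φ z) = 0 := by
    simpa using h.map_prod_eq_zero false (w ++ [centering φ z]) hwz (by simp; omega) (by simp)
  have hΦxwz : Φ (centering φ x * w.prod * centering φ z) = 0 := by
    simpa [mul_assoc] using h.map_prod_eq_zero true (centering φ x :: (w ++ [centering φ z]))
      ⟨hx₀, hwz⟩ (by simp) (by simp; omega)
  simp [map_mul_mul_eq_centering φ Φ x, hΦw, hΦxw, hΦwz, hΦxwz]

theorem HasCenteredMoments.cyclicAntimonotone {S : Type*} [SetLike S B] [MulMemClass S B] {F₁ : S}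
    (h : HasCenteredMoments φ Φ (A₁ : Set B) F₁) (hφ : φ 1 = 1) :
    CyclicAntimonotone φ Φ (A₁ : Set B) F₁ := by
  rw [cyclicAntimonotone_iff_forall_list]
  intro D hD x hx f hf z hz
  suffices hcentered : ∀ C : List (B × B), (∀ p ∈ C, (p.1 ∈ A₁ ∧ φ p.1 = 0) ∧ p.2 ∈ F₁) →
      ∀ f ∈ F₁, Φ (x * (f * (C.map fun p => p.1 * p.2).prod) * z) =
        φ (x * z) * (C.map fun p => φ p.1).prod * Φ (f * (C.map fun p => p.2).prod) by
    simpa [mul_assoc] using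
      cyclic_factorization_of_centered hφ A₁ F₁ x z hcentered D hD [] (by simp) f hf
  rintro (_ | ⟨p, C⟩) hC f hf
  · simpa using h.map_mul_mul_of_mem hφ hx hf hz
  · have hword : ∀ t, IsAlternating (centeredLetters φ (A₁ : Set B) F₁) true t →
        IsAlternating (centeredLetters φ (A₁ : Set B) F₁) false
          (f :: (((p :: C).flatMap fun p => [p.1, p.2]) ++ t)) :=
      fun t ht => ⟨hf, .flatMap_append hC ht⟩
    have hvanish := h.map_mul_prod_mul_eq_zero hφ hx (z := z)
      (w := f :: ((p :: C).flatMap fun p : B × B => [p.1, p.2])) (by simpa using hword [] trivial)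
      (hword [centering φ z] ⟨centering_mem_centeredLetters hφ F₁ hz, trivial⟩) (by simp)
    rw [List.prod_cons, prod_flatMap_pair] at hvanish
    simpa [(hC p List.mem_cons_self).1.2] using hvanish

end CenteredMoments

section InfinitesimalFreeness

theorem mem_and_map_eq_zero_iff_mem_centeredLetters {φ : B →ₗ[ℂ] ℂ} (hφ : φ 1 = 1) {A₁ F₁ : Set B}
    (hF₁ : ∀ f ∈ F₁, φ f = 0) {i : Bool} {b : B} :
    b ∈ (if i then A₁ else unitize F₁) ∧ φ b = 0 ↔ b ∈ centeredLetters φ A₁ F₁ i := by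
  cases i with
  | true => rfl
  | false =>
    constructor
    · rintro ⟨⟨c, f, hf, rfl⟩, hcf⟩
      have hc : c = 0 := by simpa [Algebra.algebraMap_eq_smul_one, hφ, hF₁ f hf] using hcf
      change _ ∈ F₁
      simpa [hc] using hf
    · exact fun hb => ⟨⟨0, b, hb, by simp⟩, hF₁ b hb⟩

theorem IsAlternating.map_prod_eq_zero {E : Type*} [Ring E] {F : TwoSidedIdeal E} {φ : E → ℂ}
    {A₁ F₁ : Set E} (hF₁ : F₁ ⊆ F) (hφF : ∀ f ∈ F, φ f = 0) :
    ∀ {i : Bool} {l : List E}, IsAlternating (centeredLetters φ A₁ F₁) i l → l ≠ [] → φ l.prod = 0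
  | true, [a], hl, _ => by simpa using hl.1.2
  | true, a :: f :: l, hl, _ => by
    simpa using hφF _ (F.mul_mem_left a _ (F.mul_mem_right _ l.prod (hF₁ hl.2.1)))
  | false, f :: l, hl, _ => by simpa using hφF _ (F.mul_mem_right _ l.prod (hF₁ hl.1))

theorem prod_map_mul_rev_eq_zero {E : Type*} [Ring E] {F : TwoSidedIdeal E} {φ : E → ℂ}
    {A₁ F₁ : Set E} (hφF : ∀ f ∈ F, φ f = 0) (hF₁ : F₁ ⊆ F) {m : ℕ}
    {idx : Fin (2 * m + 1) → Bool} {b : Fin (2 * m + 1) → E}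
    (hidx : ∀ k : Fin (2 * m), idx k.castSucc ≠ idx k.succ)
    (hb : ∀ k, b k ∈ centeredLetters φ A₁ F₁ (idx k))
    (hm : 0 < m) (hne : ¬(idx 0 = true ∧ m = 1)) :
    ∏ j : Fin m, φ (b (Fin.castLE (by omega) j) * b (Fin.castLE (by omega) j).rev) = 0 := by
  suffices ∃ j : Fin m, idx (Fin.castLE (by omega) j) = false by
    obtain ⟨j, hj⟩ := this
    have hbF : b (Fin.castLE (by omega) j) ∈ F :=
      hF₁ (by simpa [hj, centeredLetters] using hb (Fin.castLE (by omega) j))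
    exact Finset.prod_eq_zero (Finset.mem_univ j) (hφF _ (F.mul_mem_right _ _ hbF))
  cases h₀ : idx 0 with
  | false => exact ⟨⟨0, hm⟩, h₀⟩
  | true =>
    have hm₁ : 1 < m := by
      have : m ≠ 1 := fun hm => hne ⟨h₀, hm⟩
      omega
    exact ⟨⟨1, hm₁⟩, by rw [eq_xor_bodd_of_alternating hidx, h₀]; simp⟩

variable {F : TwoSidedIdeal B} {φ Φ : B →ₗ[ℂ] ℂ} {A₁ F₁ : Set B}

theorem IsInfFree.hasCenteredMoments (hφ : φ 1 = 1) (hφF : ∀ f ∈ F, φ f = 0) (hF₁ : F₁ ⊆ F)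
    (h : IsInfFree φ Φ fun i : Bool => if i then A₁ else unitize F₁) :
    HasCenteredMoments φ Φ A₁ F₁ := by
  have hmem {i b} (hb : b ∈ centeredLetters φ A₁ F₁ i) :=
    (mem_and_map_eq_zero_iff_mem_centeredLetters hφ fun f hf => hφF f (hF₁ hf)).2 hb
  obtain ⟨-, hodd, heven⟩ := h
  refine ⟨fun i l hl hlen hne => ?_, fun x hx f hf z hz => ?_⟩
  · induction l using List.ofFnRec with
    | h n b =>
      rw [isAlternating_ofFn_iff] at hl
      rw [List.length_ofFn] at hlen hne
      obtain ⟨n, rfl⟩ := Nat.exists_eq_succ_of_ne_zero (by omega : n ≠ 0)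
      let idx : Fin (n + 1) → Bool := fun k => i ^^ (k : ℕ).bodd
      have hidx : ∀ k : Fin n, idx k.castSucc ≠ idx k.succ := fun k => by simp [idx]
      by_cases hn : Even n
      · obtain ⟨m, rfl⟩ := even_iff_two_dvd.1 hn
        rw [heven m idx b hidx (fun k => (hmem (hl k)).1) (fun k => (hmem (hl k)).2)
          (eq_rev_of_alternating hn hidx),
          prod_map_mul_rev_eq_zero hφF hF₁ hidx hl (by omega)
            fun hm => hne ⟨by simpa [idx] using hm.1, by simp [hm.2]⟩,
          zero_mul]
      · exact hodd n idx b hidx (fun k => (hmem (hl k)).1) (fun k => (hmem (hl k)).2)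
          fun hpal => hn hpal.1
  · have hl : ∀ k, ![x, f, z] k ∈ centeredLetters φ A₁ F₁ (![true, false, true] k) := by
      intro k
      fin_cases k
      exacts [hx, hf, hz]
    simpa [mul_assoc] using heven 1 ![true, false, true] ![x, f, z] (by decide)
      (fun k => (hmem (hl k)).1) (fun k => (hmem (hl k)).2) (by decide)

theorem HasCenteredMoments.isInfFree (hφ : φ 1 = 1) (hφF : ∀ f ∈ F, φ f = 0) (hF₁ : F₁ ⊆ F)
    (h : HasCenteredMoments φ Φ A₁ F₁) :
    IsInfFree φ Φ fun i : Bool => if i then A₁ else unitize F₁ := by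
  have hletters {n : ℕ} {idx : Fin (n + 1) → Bool} {b : Fin (n + 1) → B}
      (hb : ∀ k, b k ∈ if idx k then A₁ else unitize F₁) (hφb : ∀ k, φ (b k) = 0)
      (k : Fin (n + 1)) : b k ∈ centeredLetters φ A₁ F₁ (idx k) :=
    (mem_and_map_eq_zero_iff_mem_centeredLetters hφ fun f hf => hφF f (hF₁ hf)).1 ⟨hb k, hφb k⟩
  refine ⟨fun n idx b hidx hb hφb => ?_, fun n idx b hidx hb hφb hpal => ?_,
    fun m idx b hidx hb hφb _ => ?_⟩
  · exact (isAlternating_ofFn hidx (hletters hb hφb)).map_prod_eq_zero hF₁ hφF (by simp)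
  · have hn : ¬Even n := fun hn => hpal ⟨hn, eq_rev_of_alternating hn hidx⟩
    have hn₀ : n ≠ 0 := by rintro rfl; simp at hn
    have hn₂ : n ≠ 2 := by rintro rfl; simp at hn
    exact h.map_prod_eq_zero _ _ (isAlternating_ofFn hidx (hletters hb hφb))
      (by simp; omega) (by simp; omega)
  · have hl := hletters hb hφb
    rcases Nat.eq_zero_or_pos m with rfl | hm
    · simp
    by_cases hshort : idx 0 = true ∧ m = 1
    · obtain ⟨h₀, rfl⟩ := hshort
      have hx : b 0 ∈ centeredLetters φ A₁ F₁ true := h₀ ▸ hl 0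
      have h₁ : idx 1 = false := by simpa [h₀] using eq_xor_bodd_of_alternating hidx 1
      have h₂ : idx 2 = true := by simpa [h₀] using eq_xor_bodd_of_alternating hidx 2
      have hf : b 1 ∈ centeredLetters φ A₁ F₁ false := h₁ ▸ hl 1
      have hz : b 2 ∈ centeredLetters φ A₁ F₁ true := h₂ ▸ hl 2
      simpa [mul_assoc] using h.map_mul_mul _ hx _ hf _ hz
    · rw [prod_map_mul_rev_eq_zero hφF hF₁ hidx hl hm hshort, zero_mul]
      exact h.map_prod_eq_zero _ _ (isAlternating_ofFn hidx hl) (by simp; omega)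
        fun h₃ => hshort ⟨h₃.1, by simpa using h₃.2⟩

end InfinitesimalFreeness

theorem statement2_general {B : Type*} [Ring B] [Algebra ℂ B] (F : TwoSidedIdeal B)
    (φ Φ φ' : B →ₗ[ℂ] ℂ) (hφ1 : φ 1 = 1) (hφF : ∀ f ∈ F, φ f = 0) (hφ'F : ∀ f ∈ F, φ' f = Φ f)
    (A₁ : Subalgebra ℂ B) (F₁ : NonUnitalSubalgebra ℂ B) (hF₁F : ∀ f ∈ F₁, f ∈ F) :
    CyclicAntimonotone ⇑φ ⇑Φ (A₁ : Set B) (F₁ : Set B) ↔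
      IsInfFree ⇑φ ⇑φ'
        (fun i : Bool => if i then (A₁ : Set B) else unitize (F₁ : Set B)) := by
  constructor
  · intro h
    have h' := h.congr_of_eqOn hF₁F fun f hf => (hφ'F f hf).symm
    exact (h'.hasCenteredMoments A₁.one_mem).isInfFree hφ1 hφF hF₁F
  · intro h
    have hmoments := h.hasCenteredMoments hφ1 hφF hF₁F
    exact (hmoments.cyclicAntimonotone hφ1).congr_of_eqOn hF₁F hφ'F

theorem statement2
    {B : Type*} [Ring B] [Algebra ℂ B]
    (A : Subalgebra ℂ B) (F : Submodule ℂ B)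
    (hFmulL : ∀ b : B, ∀ f ∈ F, b * f ∈ F)
    (hFmulR : ∀ b : B, ∀ f ∈ F, f * b ∈ F)
    (hAF : ∀ x ∈ A, x ∈ F → x = 0)
    (hdec : ∀ x : B, ∃ a ∈ A, ∃ f ∈ F, x = a + f)
    (φ Φ φ' : B →ₗ[ℂ] ℂ)
    (hφ1 : φ 1 = 1) (hφF : ∀ f ∈ F, φ f = 0)
    (hφ'A : ∀ a ∈ A, φ' a = 0) (hφ'F : ∀ f ∈ F, φ' f = Φ f)
    (A₁ : Subalgebra ℂ B) (hA₁A : A₁ ≤ A)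
    (F₁ : NonUnitalSubalgebra ℂ B) (hF₁F : ∀ f ∈ F₁, f ∈ F) :
    CyclicAntimonotone ⇑φ ⇑Φ (A₁ : Set B) (F₁ : Set B) ↔
      IsInfFree ⇑φ ⇑φ'
        (fun i : Bool => if i then (A₁ : Set B) else unitize (F₁ : Set B)) := by
  exact statement2_general
    (.mk' F F.zero_mem F.add_mem F.neg_mem (hFmulL _ _ ·) (hFmulR _ _ ·)) φ Φ φ' hφ1
    (by simpa using hφF) (by simpa using hφ'F) A₁ F₁ (by simpa using hF₁F)

end TypeBPrime
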